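/- Let n ≥ 2, r ≥ 3 integers, 1 ≤ k ≤ n/2, m = n/k − 1 ≥ 1, and α ∈ (−1/m, 0). Then H(α) := (1+αm)^r + m(1−α)^r − (1−αm)^r − m(1+α)^r ≤ 0. -/

import Mathlib

/-!
Put `b = -α ≥ 0`, `S r x = (1 + x) ^ r - (1 - x) ^ r` and `C r x = (1 + x) ^ r + (1 - x) ^ r`, twice
the odd and the even part of `(1 + x) ^ r`. The claim is `m * S r b ≤ S r (b * m)`, which holds
because `S r` has only odd powers of its argument, with nonnegative coefficients, and `m ≥ 1`.
Instead of differentiating or expanding, `odd_even_scale` argues by induction on `r` through the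
recurrences `S (r + 1) x = S r x + x * C r x` and `C (r + 1) x = C r x + x * S r x`.
-/

/-- The odd part of `(1 + x) ^ r` grows at least by the factor `m` when `b ≥ 0` is replaced by
`b * m`, and the even part does not decrease. The two inequalities, and the signs of both parts at
`b`, are needed together for the induction. -/
theorem odd_even_scale (m b : ℝ) (hm : 1 ≤ m) (hb : 0 ≤ b) (r : ℕ) :
    0 ≤ (1 + b) ^ r - (1 - b) ^ r ∧ 0 ≤ (1 + b) ^ r + (1 - b) ^ r ∧
    m * ((1 + b) ^ r - (1 - b) ^ r) ≤ (1 + b * m) ^ r - (1 - b * m) ^ r ∧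
    (1 + b) ^ r + (1 - b) ^ r ≤ (1 + b * m) ^ r + (1 - b * m) ^ r := by
  induction r with
  | zero => norm_num
  | succ r ih =>
    obtain ⟨hS, hC, hSm, hCm⟩ := ih
    simp only [pow_succ]
    generalize (1 + b) ^ r = p at *
    generalize (1 - b) ^ r = q at *
    generalize (1 + b * m) ^ r = P at *
    generalize (1 - b * m) ^ r = Q at *
    have hbm : 0 ≤ b * m := by positivity
    have h1 := mul_nonneg hb hS
    have h2 := mul_nonneg hb hC
    have h3 := mul_le_mul_of_nonneg_left hCm hbm
    have h4 : b * (p - q) ≤ b * m * (P - Q) := by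
      have hle : p - q ≤ P - Q := (le_mul_of_one_le_left hS hm).trans hSm
      exact mul_le_mul (le_mul_of_one_le_right hb hm) hle hS hbm
    refine ⟨?_, ?_, ?_, ?_⟩ <;> linarith

theorem H_nonpos (n r k : ℕ) (hn : 2 ≤ n) (hr : 3 ≤ r) (hk1 : 1 ≤ k)
    (hk2 : (k : ℝ) ≤ n / 2)
    (m : ℝ) (hm : m = (n : ℝ) / k - 1) (hm1 : 1 ≤ m)
    (α : ℝ) (hα : α ∈ Set.Ioo (-1 / m) 0) :
    (1 + α * m) ^ r + m * (1 - α) ^ r - (1 - α * m) ^ r - m * (1 + α) ^ r ≤ 0 := by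
  have h := (odd_even_scale m (-α) hm1 (by linarith [hα.2]) r).2.2.1
  simp only [neg_mul, sub_neg_eq_add, ← sub_eq_add_neg] at h
  linarith
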